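/- If A is an l-multilinear local differential operator and A_1,…,A_l are k_1-,…,k_l-multilinear local differential operators, then the composition A(A_1,…,A_l), defined by (f_1,…,f_{k_1+⋯+k_l}) ↦ A(A_1(f_1,…,f_{k_1}),…,A_l(f_{k_1+⋯+k_{l−1}+1},…,f_{k_1+⋯+k_l})), is a (k_1+⋯+k_l)-multilinear local differential operator. (Together with the permutation action of the symmetric groups this makes the collection LDO = {LDO(n)} an operad.) -/

import Mathlib

/-!
Composition of multilinear local differential operators.

Expanding the inner operators in the outer one writes `A(B_1,…,B_l)` as a sum, over tuples of
indices `(s, r_1, …, r_l)`, of the operators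
`q_s Π_i (d/dx)^{I_i} (∂/∂u)^{α_i} (p_{r_i} Π_t (d/dx)^{J_t} (∂/∂u)^{β_t} f_t)`.
By the Leibniz rule and the relations `[∂/∂u_K, d/dx^i] = ∂/∂u_J` for `K = iJ` (and `0` if `K` is
not of this form; `dU_dT`), `[d/dx^i, d/dx^j] = 0` (`dT_comm`), each term is a finite combination
of monomials. What has to be shown is that the sum is locally finite.

Let `W T m` be the `Loc(E)`-span of the monomials in the arguments `f_j`, `j ∈ T`, whose formal
degree `Σ_j deg_f(α_j)` is at least `m`. This filtration is multiplicative over disjoint groups of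
arguments (`W_mul`) and stable under all `d/dx^i` and `∂/∂u_K` (`W_dPow`, `W_uPow`), so the term
above lies in degree at least `Σ_i deg(r_i)`. Hence for given `m` only finitely many `r_i` matter,
and for these the orders of `p_{r_i}` and of the `J_t` are bounded. If `deg_f(α_i)` is large for
some `i`, a factor `∂/∂u_K` of top order kills `p_{r_i}`, and moved past `(d/dx)^{J_t}` it still
leaves derivatives of order at least `|K| - |J_t| ≥ m` (`W_large`). So only finitely many `s`
contribute in formal degree less than `m`, and `isLDO_of_sum` collects the coefficients.
-/

open scoped BigOperators

namespace JetBundle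

/-- Multi-indices `J = (j_1,…,j_N)`. -/
abbrev MI (N : ℕ) := Fin N → ℕ

/-- A point of the infinite jet bundle `J^∞E`, with coordinates `(x^i, u_J)`. -/
abbrev JetPt (N : ℕ) := (Fin N → ℝ) × (MI N → ℝ)

/-- Real-valued functions on the infinite jet bundle. -/
abbrev Fn (N : ℕ) := JetPt N → ℝ

/-- Partial derivative with respect to the base coordinate `x^i`. -/
noncomputable def pderivX {N : ℕ} (i : Fin N) (f : Fn N) : Fn N :=
  fun p => deriv (fun t => f (Function.update p.1 i t, p.2)) (p.1 i)

/-- Partial derivative with respect to the jet coordinate `u_J`. -/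
noncomputable def pderivU {N : ℕ} (J : MI N) (f : Fn N) : Fn N :=
  fun p => deriv (fun t => f (p.1, Function.update p.2 J t)) (p.2 J)

/-- `iJ` : the multi-index `J` with its `i`-th entry increased by `1`. -/
def inc {N : ℕ} (i : Fin N) (J : MI N) : MI N := Function.update J i (J i + 1)

/-- The total derivative `d/dx^i = ∂/∂x^i + Σ_J u_{iJ} ∂/∂u_J`. -/
noncomputable def Dtot {N : ℕ} (i : Fin N) (f : Fn N) : Fn N :=
  fun p => pderivX i f p + ∑' J : MI N, p.2 (inc i J) * pderivU J f p

/-- Iterated total derivative `(d/dx)^I`. -/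
noncomputable def DPow {N : ℕ} (I : MI N) : Fn N → Fn N :=
  (List.finRange N).foldr (fun i g => (Dtot i)^[I i] ∘ g) id

/-- Iterated vertical derivative `(∂/∂u)^α` for a finitely supported exponent `α`. -/
noncomputable def UPow {N : ℕ} (α : MI N →₀ ℕ) : Fn N → Fn N :=
  α.support.toList.foldr (fun J g => (pderivU J)^[α J] ∘ g) id

/-- A local function: a smooth function of the base coordinates and
finitely many jet coordinates `u_J`. -/
def IsLocal {N : ℕ} (f : Fn N) : Prop :=
  ∃ (S : Finset (MI N)) (g : ((Fin N → ℝ) × (↥S → ℝ)) → ℝ),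
    ContDiff ℝ (⊤ : ℕ∞) g ∧ ∀ p : JetPt N, f p = g (p.1, fun J => p.2 J.1)

/-- The formal differential degree of an exponent `α`: the maximal `|J|` with `α J ≠ 0`. -/
def degf {N : ℕ} (α : MI N →₀ ℕ) : ℕ := α.support.sup fun J => ∑ i, J i

/-- Index type for the coefficients of an `n`-multilinear local differential operator:
a tuple of multi-indices `(I_1,…,I_n)` and vertical exponents `(α_1,…,α_n)`. -/
abbrev Idx (N n : ℕ) := (Fin n → MI N) × (Fin n → (MI N →₀ ℕ))

/-- Coefficient data of an `n`-multilinear local differential operator. -/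
abbrev OpData (N n : ℕ) := Idx N n → Fn N

/-- `n`-multilinear operators on functions on the jet bundle. -/
abbrev Op (N n : ℕ) := (Fin n → Fn N) → Fn N

/-- An `n`-tuple of local functions. -/
def LocalTuple {N n : ℕ} (f : Fin n → Fn N) : Prop := ∀ j, IsLocal (f j)

/-- Coefficient data is admissible if all coefficients are local functions and, for each `m`,
only finitely many coefficients with `Σ_j deg_f(α_j) ≤ m` are nonzero. -/
def Good {N n : ℕ} (q : OpData N n) : Prop :=
  (∀ Iα, IsLocal (q Iα)) ∧
    ∀ m : ℕ, {Iα : Idx N n | q Iα ≠ 0 ∧ ∑ j, degf (Iα.2 j) ≤ m}.Finite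

/-- The (unpolarized) realization of coefficient data:
`A(f_1,…,f_n) = Σ p_{I,α} Π_j (d/dx)^{I_j} (∂/∂u)^{α_j} f_j`. -/
noncomputable def realizeU {N n : ℕ} (q : OpData N n) (f : Fin n → Fn N) : Fn N :=
  fun pt => ∑' Iα : Idx N n, q Iα pt * ∏ j, DPow (Iα.1 j) (UPow (Iα.2 j) (f j)) pt

/-- The polarized realization of coefficient data: the slot `I_1` records powers of
`d/dy_1 = Σ_j d/dx_j`, i.e. total derivatives applied to the whole product, while for `j ≥ 2`
the slot `I_j` records powers of `d/dy_j = d/dx_j` acting on the `j`-th argument: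
`A(f_1,…,f_n) = Σ q_{I;α} (d/dx)^{I_1} [ (∂/∂u)^{α_1}f_1 · Π_{j≥2} (d/dx)^{I_j}(∂/∂u)^{α_j} f_j ]`. -/
noncomputable def realizeP {N n : ℕ} [NeZero n] (q : OpData N n) (f : Fin n → Fn N) : Fn N :=
  fun pt => ∑' Iα : Idx N n, q Iα pt *
    DPow (Iα.1 0) (fun p => ∏ j,
      if j = (0 : Fin n) then UPow (Iα.2 j) (f j) p
      else DPow (Iα.1 j) (UPow (Iα.2 j) (f j)) p) pt

/-- The characteristic, on polarized coefficient data: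
`χ(q)_{(0,I_2,…,I_n);α} := Σ_{I_1} (−1)^{|I_1|} (d/dx)^{I_1} q_{I_1,I_2,…,I_n;α}`. -/
noncomputable def chiData {N n : ℕ} [NeZero n] (q : OpData N n) : OpData N n :=
  fun Iα =>
    if Iα.1 0 = 0 then
      fun pt => ∑' K : MI N,
        (-1 : ℝ) ^ (∑ i, K i) * DPow K (q (Function.update Iα.1 0 K, Iα.2)) pt
    else 0

/-- `q` is a polarized presentation of the operator `A` (on local functions). -/
def Presents {N n : ℕ} [NeZero n] (q : OpData N n) (A : Op N n) : Prop :=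
  ∀ f, LocalTuple f → ∀ pt, A f pt = realizeP q f pt

/-- `A` is an `n`-multilinear local differential operator (unpolarized form). -/
def IsLDO {N n : ℕ} (A : Op N n) : Prop :=
  ∃ q : OpData N n, Good q ∧ ∀ f, LocalTuple f → ∀ pt, A f pt = realizeU q f pt

/-- `A` is an `n`-multilinear local differential operator, given by a polarized presentation. -/
def IsPLDO {N n : ℕ} [NeZero n] (A : Op N n) : Prop :=
  ∃ q : OpData N n, Good q ∧ Presents q A

/-- `A` is an `n`-multilinear local differential operator with vanishing characteristic. -/
def ChiZero {N n : ℕ} [NeZero n] (A : Op N n) : Prop :=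
  ∃ q : OpData N n, Good q ∧ Presents q A ∧
    ∀ f, LocalTuple f → ∀ pt, realizeP (chiData q) f pt = 0

/-- Precomposition `A ∘ d/dx^i_j` with the total derivative acting on the `j`-th argument. -/
noncomputable def precompD {N n : ℕ} (A : Op N n) (i : Fin N) (j : Fin n) : Op N n :=
  fun f => A (Function.update f j (Dtot i (f j)))

/-- A horizontal form, recorded by its coefficients on the basis
`(dx)^ε = (dx^1)^{ε^1} ∧ ⋯ ∧ (dx^N)^{ε^N}`, `ε : Fin N → Bool`. -/
abbrev Form (N : ℕ) := (Fin N → Bool) → Fn N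

/-- The form-degree `|ε|`. -/
def wt {N : ℕ} (ε : Fin N → Bool) : ℕ := ∑ i, if ε i then 1 else 0

/-- The sign exponent: the number of entries of `ε` below `i` which are set. -/
def pos {N : ℕ} (i : Fin N) (ε : Fin N → Bool) : ℕ := ∑ l, if l < i ∧ ε l then 1 else 0

/-- The horizontal differential `d_H ω = Σ_i dx^i ∧ (d/dx^i) ω`. -/
noncomputable def dH {N : ℕ} (ω : Form N) : Form N :=
  fun δ pt => ∑ i : Fin N,
    if δ i then (-1 : ℝ) ^ pos i δ * Dtot i (ω (Function.update δ i false)) pt else 0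

/-- A matrix of operators acting on horizontal forms (linear case). -/
abbrev FormOp (N : ℕ) := (Fin N → Bool) → (Fin N → Bool) → (Fn N → Fn N)

/-- Application of a matrix of operators to a form. -/
noncomputable def applyFO {N : ℕ} (M : FormOp N) (ω : Form N) : Form N :=
  fun δ pt => ∑ ε : Fin N → Bool, M ε δ (ω ε) pt

/-- A degree element of `DEnd(n)`: a matrix indexed by basis multidegrees of the inputs
`(ε_1,…,ε_n)` and of the output `δ`, with `n`-multilinear operator entries. -/
abbrev DMat (N n : ℕ) := (Fin n → (Fin N → Bool)) → (Fin N → Bool) → Op N n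

/-- All matrix entries are local differential operators. -/
def LDOMat {N n : ℕ} [NeZero n] (F : DMat N n) : Prop := ∀ εs δ, IsPLDO (F εs δ)

/-- `F` represents a degree-`k` map of the regraded horizontal complexes
(`Ω_i := Ω^{N−i,0}`): the entry at `(ε⃗, δ)` vanishes unless
`N − wt δ = k + Σ_j (N − wt ε_j)`. -/
def GradedMat {N n : ℕ} (k : ℤ) (F : DMat N n) : Prop :=
  ∀ εs δ, F εs δ ≠ 0 → (wt δ : ℤ) = (N : ℤ) - k - ∑ j, ((N : ℤ) - (wt (εs j) : ℤ))

/-- The differential `(δf)_s = d_H f_s − (−1)^k f_{s−1} d_H^{⊗n}` of the complex `DEnd_*(n)`,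
written out on matrix entries. -/
noncomputable def deltaMat {N n : ℕ} (k : ℤ) (F : DMat N n) : DMat N n :=
  fun εs δ g =>
    (fun pt => ∑ i : Fin N,
      if δ i then (-1 : ℝ) ^ pos i δ * Dtot i (F εs (Function.update δ i false) g) pt else 0)
    -
    ((-1 : ℝ) ^ k) • (fun pt => ∑ j : Fin n, ∑ i : Fin N,
      if εs j i = false then
        (-1 : ℝ) ^ ((∑ l ∈ Finset.univ.filter fun l => l < j, wt (εs l)) + pos i (εs j)) *
          F (Function.update εs j (Function.update (εs j) i true)) δ
            (Function.update g j (Dtot i (g j))) pt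
      else 0)

/-- A matrix of operators vanishes (on local arguments). -/
def MatZeroLoc {N n : ℕ} (F : DMat N n) : Prop :=
  ∀ εs δ g, LocalTuple g → ∀ pt, F εs δ g pt = 0

/-- Two matrices of operators agree (on local arguments). -/
def MatEqLoc {N n : ℕ} (F G : DMat N n) : Prop :=
  ∀ εs δ g, LocalTuple g → ∀ pt, F εs δ g pt = G εs δ g pt

/-- The projection `B_0 : DEnd_0(n) → LDO(n)`, i.e. the component `f_0` on the identifications
`[(Ω_*)^{⊗n}]_0 ≅ Loc(E)^{⊗n}`, `Ω_0 ≅ Loc(E)`. -/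
def B0 {N n : ℕ} (F : DMat N n) : Op N n := F (fun _ _ => true) fun _ => true

/-- A form with coefficients in `LDO(n)`: an element of the operator complex `O^*(n)`. -/
abbrev OForm (N n : ℕ) := (Fin N → Bool) → Op N n

/-- The differential of the operator complex: `d(A (dx)^ε) = Σ_i (d/dx^i ∘ A) dx^i ∧ (dx)^ε`. -/
noncomputable def dO {N n : ℕ} (ω : OForm N n) : OForm N n :=
  fun δ g pt => ∑ i : Fin N,
    if δ i then (-1 : ℝ) ^ pos i δ * Dtot i (ω (Function.update δ i false) g) pt else 0

/-- An element of `O^*(n)` concentrated in degree `k`. -/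
def OGraded {N n : ℕ} (k : ℕ) (ω : OForm N n) : Prop := ∀ δ, ω δ ≠ 0 → wt δ = k

/-- All coefficients are local differential operators. -/
def OLDO {N n : ℕ} [NeZero n] (ω : OForm N n) : Prop := ∀ δ, IsPLDO (ω δ)

/-- An element of `O^*(n)` vanishes on local arguments. -/
def OZeroLoc {N n : ℕ} (ω : OForm N n) : Prop :=
  ∀ δ g, LocalTuple g → ∀ pt, ω δ g pt = 0

/-- Two elements of `O^*(n)` agree on local arguments. -/
def OEqLoc {N n : ℕ} (ω η : OForm N n) : Prop :=
  ∀ δ g, LocalTuple g → ∀ pt, ω δ g pt = η δ g pt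

/-- The Euler operator `E(L dx^1∧⋯∧dx^N) = Σ_I (−1)^{|I|} (d/dx)^I (∂L/∂u_I)`. -/
noncomputable def Euler {N : ℕ} (L : Fn N) : Fn N :=
  fun pt => ∑' I : MI N, (-1 : ℝ) ^ (∑ i, I i) * DPow I (pderivU I L) pt

end JetBundle
namespace JetBundle


/-! ### Local functions and directional derivatives -/

/-- The projection of `J^∞E` onto the base coordinates and the jet coordinates in `S`. -/
def res {N : ℕ} (S : Finset (MI N)) : JetPt N →ₗ[ℝ] ((Fin N → ℝ) × (↥S → ℝ)) where
  toFun p := (p.1, fun J => p.2 J.1)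
  map_add' _ _ := rfl
  map_smul' _ _ := rfl

lemma IsLocal.enlarge {N : ℕ} {f : Fn N} (hf : IsLocal f) :
    ∃ S₀ : Finset (MI N), ∀ S, S₀ ⊆ S → ∃ g : ((Fin N → ℝ) × (↥S → ℝ)) → ℝ,
      ContDiff ℝ (⊤ : ℕ∞) g ∧ f = g ∘ res S := by
  obtain ⟨S₀, g, hg, h⟩ := hf
  refine ⟨S₀, fun S hS => ⟨fun y => g (y.1, fun J => y.2 ⟨J.1, hS J.2⟩), ?_, ?_⟩⟩
  · refine hg.comp (contDiff_fst.prodMk (contDiff_pi.2 fun J => ?_))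
    exact (contDiff_apply ℝ ℝ _).comp contDiff_snd
  · funext p
    exact h p

lemma IsLocal.of_rep {N : ℕ} {S : Finset (MI N)} {g : ((Fin N → ℝ) × (↥S → ℝ)) → ℝ}
    (hg : ContDiff ℝ (⊤ : ℕ∞) g) : IsLocal (g ∘ res S) :=
  ⟨S, g, hg, fun _ => rfl⟩

/-- Two local functions factor through a common finite set of jet coordinates. -/
lemma IsLocal.rep₂ {N : ℕ} {f h : Fn N} (hf : IsLocal f) (hh : IsLocal h) :
    ∃ (S : Finset (MI N)) (a b : ((Fin N → ℝ) × (↥S → ℝ)) → ℝ),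
      ContDiff ℝ (⊤ : ℕ∞) a ∧ ContDiff ℝ (⊤ : ℕ∞) b ∧ f = a ∘ res S ∧ h = b ∘ res S := by
  classical
  obtain ⟨S₁, h₁⟩ := hf.enlarge
  obtain ⟨S₂, h₂⟩ := hh.enlarge
  obtain ⟨a, ha, rfl⟩ := h₁ (S₁ ∪ S₂) Finset.subset_union_left
  obtain ⟨b, hb, rfl⟩ := h₂ (S₁ ∪ S₂) Finset.subset_union_right
  exact ⟨_, a, b, ha, hb, rfl, rfl⟩

/-- The directional derivative along `v` on functions on the jet bundle. -/
noncomputable def dir {N : ℕ} (v : JetPt N) (f : Fn N) : Fn N := fun p => lineDeriv ℝ f p v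

lemma dir_rep {N : ℕ} {S : Finset (MI N)} {g : ((Fin N → ℝ) × (↥S → ℝ)) → ℝ}
    (hg : ContDiff ℝ (⊤ : ℕ∞) g) (v : JetPt N) :
    dir v (g ∘ res S) = (fun y => fderiv ℝ g y (res S v)) ∘ res S := by
  funext p
  have h := (hg.differentiable (by simp) (res S p)).hasFDerivAt.hasLineDerivAt (res S v)
  have := h.lineDeriv
  simp only [lineDeriv] at this
  simp only [dir, lineDeriv, Function.comp_apply, map_add, map_smul]
  exact this

lemma contDiff_dir {N : ℕ} {S : Finset (MI N)} {g : ((Fin N → ℝ) × (↥S → ℝ)) → ℝ}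
    (hg : ContDiff ℝ (⊤ : ℕ∞) g) (w : (Fin N → ℝ) × (↥S → ℝ)) :
    ContDiff ℝ (⊤ : ℕ∞) (fun y => fderiv ℝ g y w) :=
  (hg.fderiv_right (m := (⊤ : ℕ∞)) (by exact le_rfl)).clm_apply contDiff_const

lemma IsLocal.dir {N : ℕ} {f : Fn N} (hf : IsLocal f) (v : JetPt N) : IsLocal (dir v f) := by
  obtain ⟨S, a, -, ha, -, rfl, -⟩ := hf.rep₂ hf
  rw [dir_rep ha]
  exact .of_rep (contDiff_dir ha _)

lemma dir_add {N : ℕ} {f h : Fn N} (hf : IsLocal f) (hh : IsLocal h) (v : JetPt N) :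
    dir v (f + h) = dir v f + dir v h := by
  obtain ⟨S, a, b, ha, hb, rfl, rfl⟩ := hf.rep₂ hh
  have : (a ∘ res S + b ∘ res S) = (a + b) ∘ res S := rfl
  rw [this, dir_rep ha, dir_rep hb, dir_rep (show ContDiff ℝ _ (a + b) from ha.add hb)]
  funext p
  simp only [Function.comp_apply, Pi.add_apply]
  rw [fderiv_add (ha.differentiable (by simp) _) (hb.differentiable (by simp) _)]
  rfl

lemma dir_mul {N : ℕ} {f h : Fn N} (hf : IsLocal f) (hh : IsLocal h) (v : JetPt N) :
    dir v (f * h) = f * dir v h + h * dir v f := by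
  obtain ⟨S, a, b, ha, hb, rfl, rfl⟩ := hf.rep₂ hh
  have : (a ∘ res S * b ∘ res S) = (a * b) ∘ res S := rfl
  rw [this, dir_rep ha, dir_rep hb, dir_rep (show ContDiff ℝ _ (a * b) from ha.mul hb)]
  funext p
  simp only [Function.comp_apply, Pi.add_apply, Pi.mul_apply]
  rw [fderiv_mul (ha.differentiable (by simp) _) (hb.differentiable (by simp) _)]
  simp

/-- Symmetry of second derivatives. -/
lemma dir_comm {N : ℕ} {f : Fn N} (hf : IsLocal f) (v w : JetPt N) :
    dir v (dir w f) = dir w (dir v f) := by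
  obtain ⟨S, a, -, ha, -, rfl, -⟩ := hf.rep₂ hf
  rw [dir_rep ha, dir_rep ha, dir_rep (contDiff_dir ha _), dir_rep (contDiff_dir ha _)]
  funext p
  have hd : DifferentiableAt ℝ (fderiv ℝ a) (res S p) :=
    ((ha.fderiv_right (m := (⊤ : ℕ∞)) (by exact le_rfl)).differentiable (by simp)) _
  simp only [Function.comp_apply]
  rw [fderiv_clm_apply hd (by fun_prop), fderiv_clm_apply hd (by fun_prop)]
  have hs : IsSymmSndFDerivAt ℝ a (res S p) :=
    ha.contDiffAt.isSymmSndFDerivAt (by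
      rw [minSmoothness_of_isRCLikeNormedField]
      exact WithTop.coe_le_coe.2 (le_top : (2 : ℕ∞) ≤ ⊤))
  simpa using hs.eq _ _

/-- A local function does not depend on all but finitely many jet coordinates. -/
lemma IsLocal.dir_eq_zero {N : ℕ} {f : Fn N} (hf : IsLocal f) :
    ∃ S : Finset (MI N), ∀ J ∉ S, JetBundle.dir (0, Pi.single J 1) f = 0 := by
  obtain ⟨S, a, -, ha, -, rfl, -⟩ := hf.rep₂ hf
  refine ⟨S, fun J hJ => ?_⟩
  have : res S (0, Pi.single J 1) = 0 := by
    refine Prod.ext rfl (funext fun K => ?_)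
    have : (K : MI N) ≠ J := fun h => hJ (h ▸ K.2)
    simp [res, this]
  rw [dir_rep ha, this]
  funext p
  simp

lemma pderivX_eq {N : ℕ} (i : Fin N) (f : Fn N) : pderivX i f = dir (Pi.single i 1, 0) f := by
  funext p
  have h : ∀ t : ℝ, Function.update p.1 i (p.1 i + t) = p.1 + t • Pi.single i 1 := by
    intro t; funext j
    by_cases hj : j = i
    · subst hj; simp
    · simp [hj]
  simp only [dir, lineDeriv, pderivX]
  have := deriv_comp_const_add (fun t => f (Function.update p.1 i t, p.2)) (p.1 i) 0
  rw [add_zero] at this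
  rw [← this]
  congr 1
  funext t
  rw [h]
  congr 1
  exact Prod.ext rfl (by simp)

lemma pderivU_eq {N : ℕ} (J : MI N) (f : Fn N) : pderivU J f = dir (0, Pi.single J 1) f := by
  classical
  funext p
  have h : ∀ t : ℝ, Function.update p.2 J (p.2 J + t) = p.2 + t • Pi.single J 1 := by
    intro t; funext j
    by_cases hj : j = J
    · subst hj; simp
    · simp [hj]
  simp only [dir, lineDeriv, pderivU]
  have := deriv_comp_const_add (fun t => f (p.1, Function.update p.2 J t)) (p.2 J) 0
  rw [add_zero] at this
  rw [← this]
  congr 1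
  funext t
  have h' := h t
  congr 1
  refine Prod.ext (by simp) ?_
  refine Eq.trans ?_ (h'.trans rfl)
  congr

/-! ### The algebra of local functions and its derivations -/

/-- The algebra `Loc(E)` of local functions. -/
def Loc (N : ℕ) : Subalgebra ℝ (Fn N) where
  carrier := {f | IsLocal f}
  mul_mem' := by
    intro f h hf hh
    obtain ⟨S, a, b, ha, hb, rfl, rfl⟩ := IsLocal.rep₂ hf hh
    exact .of_rep (ha.mul hb)
  add_mem' := by
    intro f h hf hh
    obtain ⟨S, a, b, ha, hb, rfl, rfl⟩ := IsLocal.rep₂ hf hh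
    exact .of_rep (ha.add hb)
  algebraMap_mem' r := ⟨∅, fun _ => r, contDiff_const, fun _ => rfl⟩

/-- The jet coordinate `u_J` as a local function. -/
def uCoord {N : ℕ} (J : MI N) : Loc N :=
  ⟨fun p => p.2 J, {J}, fun y => y.2 ⟨J, by simp⟩,
    (contDiff_apply ℝ ℝ _).comp contDiff_snd, fun _ => rfl⟩

lemma dir_const {N : ℕ} (v : JetPt N) (r : ℝ) : dir v (algebraMap ℝ (Fn N) r) = 0 := by
  funext p
  simp [dir, lineDeriv, Pi.algebraMap_apply]

/-- The directional derivative along `v` as a derivation of `Loc(E)`. -/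
noncomputable def dirD {N : ℕ} (v : JetPt N) : Derivation ℝ (Loc N) (Loc N) where
  toFun f := ⟨dir v f, f.2.dir v⟩
  map_add' f h := Subtype.ext (dir_add f.2 h.2 v)
  map_smul' r f := by
    apply Subtype.ext
    have h := dir_mul (Loc N |>.algebraMap_mem r) f.2 v
    rw [dir_const, mul_zero, add_zero] at h
    simpa [Algebra.smul_def] using h
  map_one_eq_zero' := by
    apply Subtype.ext
    have h := dir_const v (1 : ℝ)
    rw [map_one] at h
    exact h
  leibniz' f h := Subtype.ext (dir_mul f.2 h.2 v)

/-- `∂/∂x^i` as a derivation of `Loc(E)`. -/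
noncomputable def dX {N : ℕ} (i : Fin N) : Derivation ℝ (Loc N) (Loc N) :=
  dirD (Pi.single i 1, 0)

/-- `∂/∂u_J` as a derivation of `Loc(E)`. -/
noncomputable def dU {N : ℕ} (J : MI N) : Derivation ℝ (Loc N) (Loc N) :=
  dirD (0, Pi.single J 1)

lemma coe_dX {N : ℕ} (i : Fin N) (f : Loc N) : (dX i f : Fn N) = pderivX i f :=
  (pderivX_eq i f).symm

lemma coe_dU {N : ℕ} (J : MI N) (f : Loc N) : (dU J f : Fn N) = pderivU J f :=
  (pderivU_eq J f).symm

lemma dirD_comm {N : ℕ} (v w : JetPt N) (f : Loc N) : dirD v (dirD w f) = dirD w (dirD v f) :=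
  Subtype.ext (dir_comm f.2 v w)

lemma exists_dU_eq_zero {N : ℕ} (f : Loc N) :
    ∃ S : Finset (MI N), ∀ J ∉ S, dU J f = 0 := by
  obtain ⟨S, h⟩ := f.2.dir_eq_zero
  exact ⟨S, fun J hJ => Subtype.ext (h J hJ)⟩

lemma dX_uCoord {N : ℕ} (i : Fin N) (J : MI N) : dX i (uCoord J) = 0 := by
  apply Subtype.ext
  funext p
  simp [coe_dX, pderivX, uCoord]

lemma dU_uCoord {N : ℕ} (K J : MI N) : dU K (uCoord J) = if J = K then 1 else 0 := by
  apply Subtype.ext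
  funext p
  rw [coe_dU]
  by_cases h : J = K
  · subst h; simp [pderivU, uCoord]
  · simp [pderivU, uCoord, h]

/-- On a local function, the infinite sum in the total derivative is a finite one. -/
lemma Dtot_eq {N : ℕ} (i : Fin N) (f : Loc N) {T : Finset (MI N)} (hT : ∀ J ∉ T, dU J f = 0) :
    Dtot i f = (dX i f + ∑ J ∈ T, uCoord (inc i J) * dU J f : Loc N) := by
  funext p
  have h0 : ∀ J ∉ T, p.2 (inc i J) * pderivU J f p = 0 := by
    intro J hJ
    rw [← coe_dU, hT J hJ]; simp
  simp only [Dtot]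
  rw [tsum_eq_sum (s := T) h0, ← coe_dX]
  simp [← coe_dU, uCoord, Finset.sum_apply]

lemma IsLocal_Dtot {N : ℕ} (i : Fin N) (f : Loc N) : IsLocal (Dtot i f) := by
  obtain ⟨T, hT⟩ := exists_dU_eq_zero f
  rw [Dtot_eq i f hT]
  exact Subtype.property _

lemma exists_dU_eq_zero₃ {N : ℕ} (f g h : Loc N) :
    ∃ S : Finset (MI N), (∀ J ∉ S, dU J f = 0) ∧ (∀ J ∉ S, dU J g = 0) ∧
      (∀ J ∉ S, dU J h = 0) := by
  classical
  obtain ⟨S, hS⟩ := exists_dU_eq_zero f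
  obtain ⟨T, hT⟩ := exists_dU_eq_zero g
  obtain ⟨R, hR⟩ := exists_dU_eq_zero h
  refine ⟨S ∪ T ∪ R, fun J hJ => hS J ?_, fun J hJ => hT J ?_, fun J hJ => hR J ?_⟩ <;>
    simp_all

/-- The total derivative `d/dx^i` as a derivation of `Loc(E)`. -/
noncomputable def dT {N : ℕ} (i : Fin N) : Derivation ℝ (Loc N) (Loc N) where
  toFun f := ⟨Dtot i f, IsLocal_Dtot i f⟩
  map_add' f h := by
    obtain ⟨T, h₁, h₂, -⟩ := exists_dU_eq_zero₃ f h h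
    apply Subtype.ext
    refine (Dtot_eq i (f + h) (T := T) fun J hJ => by simp [h₁ J hJ, h₂ J hJ]).trans ?_
    refine Eq.trans ?_ (congrArg₂ (· + ·) (Dtot_eq i f h₁) (Dtot_eq i h h₂)).symm
    rw [← AddMemClass.coe_add]
    congr 1
    simp only [map_add, mul_add, Finset.sum_add_distrib]
    ring
  map_smul' r f := by
    obtain ⟨T, h₁⟩ := exists_dU_eq_zero f
    apply Subtype.ext
    refine (Dtot_eq i (r • f) (T := T) fun J hJ => by simp [h₁ J hJ]).trans ?_
    refine Eq.trans ?_ (congrArg (r • ·) (Dtot_eq i f h₁)).symm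
    change _ = ((r • (dX i f + ∑ J ∈ T, uCoord (inc i J) * dU J f) : Loc N) : Fn N)
    congr 1
    simp only [Derivation.map_smul, mul_smul_comm, smul_add, Finset.smul_sum]
  map_one_eq_zero' := by
    apply Subtype.ext
    refine (Dtot_eq i (1 : Loc N) (T := ∅) fun J hJ => by simp).trans ?_
    simp
  leibniz' f h := by
    obtain ⟨T, h₁, h₂, -⟩ := exists_dU_eq_zero₃ f h h
    apply Subtype.ext
    refine (Dtot_eq i (f * h) (T := T) fun J hJ => by simp [h₁ J hJ, h₂ J hJ]).trans ?_
    have e₁ : (⟨Dtot i f, IsLocal_Dtot i f⟩ : Loc N) = _ := Subtype.ext (Dtot_eq i f h₁)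
    have e₂ : (⟨Dtot i h, IsLocal_Dtot i h⟩ : Loc N) = _ := Subtype.ext (Dtot_eq i h h₂)
    refine congrArg Subtype.val ?_
    change _ = f • (⟨Dtot i h, IsLocal_Dtot i h⟩ : Loc N) +
      h • (⟨Dtot i f, IsLocal_Dtot i f⟩ : Loc N)
    rw [e₁, e₂]
    simp only [Derivation.leibniz, smul_eq_mul, mul_add, Finset.sum_add_distrib, Finset.mul_sum,
      mul_left_comm]
    ring

lemma coe_dT {N : ℕ} (i : Fin N) (f : Loc N) : (dT i f : Fn N) = Dtot i f := rfl

lemma dT_eq {N : ℕ} (i : Fin N) (f : Loc N) {T : Finset (MI N)} (hT : ∀ J ∉ T, dU J f = 0) :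
    dT i f = dX i f + ∑ J ∈ T, uCoord (inc i J) * dU J f :=
  Subtype.ext (Dtot_eq i f hT)

lemma dU_comm {N : ℕ} (J K : MI N) (f : Loc N) : dU J (dU K f) = dU K (dU J f) :=
  dirD_comm _ _ f

lemma dX_dU_comm {N : ℕ} (i : Fin N) (K : MI N) (f : Loc N) :
    dX i (dU K f) = dU K (dX i f) :=
  dirD_comm _ _ f

lemma dX_comm {N : ℕ} (i j : Fin N) (f : Loc N) : dX i (dX j f) = dX j (dX i f) :=
  dirD_comm _ _ f

lemma dX_dT {N : ℕ} (i j : Fin N) (f : Loc N) : dX i (dT j f) = dT j (dX i f) := by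
  obtain ⟨T, h₁, h₂, -⟩ := exists_dU_eq_zero₃ f (dX i f) f
  rw [dT_eq j f h₁, dT_eq j (dX i f) h₂]
  simp [dX_uCoord, dX_comm i j, dX_dU_comm]

/-- The commutation relation `[∂/∂u_K, d/dx^i] = ∂/∂u_J` where `iJ = K`. -/
lemma dU_dT {N : ℕ} (i : Fin N) (K : MI N) (f : Loc N) {T : Finset (MI N)}
    (hT : ∀ J ∉ T, dU J f = 0) :
    dU K (dT i f) = dT i (dU K f) + ∑ J ∈ T, if inc i J = K then dU J f else 0 := by
  have h₂ : ∀ J ∉ T, dU J (dU K f) = 0 := fun J hJ => by rw [dU_comm, hT J hJ, map_zero]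
  rw [dT_eq i f hT, dT_eq i (dU K f) h₂]
  simp only [map_add, map_sum, Derivation.leibniz, dU_uCoord, dX_dU_comm, smul_eq_mul, mul_ite,
    mul_one, mul_zero, Finset.sum_add_distrib, dU_comm K, add_assoc]

lemma inc_injective {N : ℕ} (i : Fin N) : Function.Injective (inc (N := N) i) := by
  intro J K h
  funext j
  have := congrFun h j
  by_cases hj : j = i
  · subst hj; simpa [inc] using this
  · simpa [inc, hj] using this

lemma inc_comm {N : ℕ} (i j : Fin N) (J : MI N) : inc i (inc j J) = inc j (inc i J) := by
  funext k
  by_cases h : i = j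
  · rw [h]
  · by_cases h1 : k = i
    · subst h1; simp [inc, h]
    · by_cases h2 : k = j
      · subst h2; simp [inc, h1]
      · simp [inc, h1, h2]

lemma sum_inc {N : ℕ} (i : Fin N) (J : MI N) : ∑ j, inc i J j = ∑ j, J j + 1 := by
  rw [inc, Finset.sum_update_of_mem (Finset.mem_univ i),
    ← Finset.add_sum_erase Finset.univ J (Finset.mem_univ i), Finset.sdiff_singleton_eq_erase]
  ring

lemma dT_uCoord {N : ℕ} (i : Fin N) (J : MI N) : dT i (uCoord J) = uCoord (inc i J) := by
  rw [dT_eq i (uCoord J) (T := {J})]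
  · simp [dX_uCoord, dU_uCoord]
  · intro K hK
    rw [dU_uCoord, if_neg]
    simpa [eq_comm] using hK

/-- Total derivatives commute. -/
lemma dT_comm {N : ℕ} (i j : Fin N) (f : Loc N) : dT i (dT j f) = dT j (dT i f) := by
  classical
  obtain ⟨S, hS⟩ := exists_dU_eq_zero f
  -- `T` contains every jet coordinate on which `f` and `d f / d x^j` depend.
  set T := S ∪ S.image (inc j) with hT_def
  have hT : ∀ J ∉ T, dU J f = 0 := fun J hJ => hS J (by simp_all)
  have hj : ∀ J ∉ T, dU J (dT j f) = 0 := by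
    intro J hJ
    rw [dU_dT j J f hS, hT J hJ, map_zero, zero_add]
    refine Finset.sum_eq_zero fun K hK => if_neg ?_
    rintro rfl
    exact hJ (Finset.mem_union_right _ (Finset.mem_image_of_mem _ hK))
  have hR : dT j (dT i f) = dX i (dT j f) + ∑ K ∈ T, uCoord (inc i K) * dT j (dU K f)
      + ∑ K ∈ T, uCoord (inc j (inc i K)) * dU K f := by
    rw [dT_eq i f hT]
    simp only [map_add, map_sum, Derivation.leibniz, dT_uCoord, smul_eq_mul,
      Finset.sum_add_distrib, dX_dT, mul_comm (dU _ f)]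
    ring
  rw [hR, dT_eq i _ hj, add_assoc]
  congr 1
  simp only [dU_dT j _ f hT, mul_add, Finset.sum_add_distrib]
  congr 1
  simp only [Finset.mul_sum, mul_ite, mul_zero]
  rw [Finset.sum_comm]
  refine Finset.sum_congr rfl fun J _ => ?_
  rw [Finset.sum_ite_eq]
  split_ifs with h
  · rw [inc_comm]
  · have : J ∉ S := fun hJ => h (Finset.mem_union_right _ (Finset.mem_image_of_mem _ hJ))
    rw [hS J this, mul_zero]

/-! ### Iterated derivatives -/

/-- In a product over a list without repetitions of powers of commuting elements, one more
factor is absorbed by raising an exponent. -/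
lemma mul_prod_pow_list {M κ : Type*} [Monoid M] [DecidableEq κ] {x : κ → M}
    (hx : ∀ a b, Commute (x a) (x b)) (I : κ → ℕ) (a : κ) :
    ∀ l : List κ, l.Nodup → a ∈ l →
      x a * (l.map fun i => x i ^ I i).prod
        = (l.map fun i => x i ^ Function.update I a (I a + 1) i).prod := by
  intro l
  induction l with
  | nil => simp
  | cons b l ih =>
    intro hl ha
    rw [List.nodup_cons] at hl
    simp only [List.map_cons, List.prod_cons]
    by_cases hab : a = b
    · subst hab
      have : (l.map fun i => x i ^ Function.update I a (I a + 1) i) =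
          l.map fun i => x i ^ I i := by
        refine List.map_congr_left fun i hi => ?_
        rw [Function.update_of_ne]
        rintro rfl
        exact hl.1 hi
      rw [this, Function.update_self, pow_succ', mul_assoc]
    · have hal : a ∈ l := by simpa [hab] using ha
      rw [← ih hl.2 hal, Function.update_of_ne (Ne.symm hab), ← mul_assoc, ← mul_assoc,
        ((hx a b).pow_right _).eq]

/-- `d/dx^i` as a linear endomorphism of `Loc(E)`. -/
noncomputable def eT {N : ℕ} (i : Fin N) : Module.End ℝ (Loc N) := (dT i).toLinearMap

/-- `∂/∂u_J` as a linear endomorphism of `Loc(E)`. -/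
noncomputable def eU {N : ℕ} (J : MI N) : Module.End ℝ (Loc N) := (dU J).toLinearMap

lemma eT_comm {N : ℕ} (i j : Fin N) : Commute (eT i) (eT j) :=
  LinearMap.ext fun f => dT_comm i j f

lemma eU_comm {N : ℕ} (J K : MI N) : Commute (eU J) (eU K) :=
  LinearMap.ext fun f => dU_comm J K f

/-- `(d/dx)^I` on `Loc(E)`. -/
noncomputable def dPow {N : ℕ} (I : MI N) : Module.End ℝ (Loc N) :=
  ((List.finRange N).map fun i => eT i ^ I i).prod

/-- `(∂/∂u)^α` on `Loc(E)`. -/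
noncomputable def uPow {N : ℕ} (α : MI N →₀ ℕ) : Module.End ℝ (Loc N) :=
  (α.support.toList.map fun J => eU J ^ α J).prod

lemma coe_foldr {N : ℕ} {κ : Type*} (E : κ → Module.End ℝ (Loc N)) (D : κ → Fn N → Fn N)
    (h : ∀ a (f : Loc N), (E a f : Fn N) = D a f) (I : κ → ℕ) (l : List κ) (f : Loc N) :
    ((l.map fun i => E i ^ I i).prod f : Fn N)
      = l.foldr (fun i g => (D i)^[I i] ∘ g) id (f : Fn N) := by
  have hpow : ∀ a n (g : Loc N), ((E a ^ n) g : Fn N) = (D a)^[n] g := by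
    intro a n
    induction n with
    | zero => intro g; rfl
    | succ n ih =>
      intro g
      rw [pow_succ, Module.End.mul_apply, ih, h, Function.iterate_succ_apply]
  induction l with
  | nil => rfl
  | cons b l ih =>
    rw [List.map_cons, List.prod_cons, Module.End.mul_apply, hpow, ih]
    rfl

lemma coe_dPow {N : ℕ} (I : MI N) (f : Loc N) : (dPow I f : Fn N) = DPow I f :=
  coe_foldr eT Dtot (fun _ _ => rfl) I _ f

lemma coe_uPow {N : ℕ} (α : MI N →₀ ℕ) (f : Loc N) : (uPow α f : Fn N) = UPow α f :=
  coe_foldr eU pderivU coe_dU α _ f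

lemma dPow_zero {N : ℕ} (f : Loc N) : dPow 0 f = f := by
  simp [dPow]

lemma dPow_inc {N : ℕ} (i : Fin N) (I : MI N) (f : Loc N) :
    dPow (inc i I) f = dT i (dPow I f) := by
  have h := mul_prod_pow_list eT_comm I i _ (List.nodup_finRange N) (List.mem_finRange i)
  exact (LinearMap.congr_fun h f).symm

lemma uPow_add_single {N : ℕ} (K : MI N) (α : MI N →₀ ℕ) (f : Loc N) :
    uPow (α + Finsupp.single K 1) f = dU K (uPow α f) := by
  classical
  -- Both sides are evaluated on the list that enumerates `K` first.
  have hsupp : (α + Finsupp.single K 1).support = insert K (α.support.erase K) := by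
    ext J
    by_cases hJ : J = K
    · subst hJ; simp
    · simp [hJ]
  have hlist : ∀ β : MI N →₀ ℕ, β.support ⊆ insert K (α.support.erase K) →
      α.support.erase K ⊆ β.support →
      uPow β = ((K :: (α.support.erase K).toList).map fun J => eU J ^ β J).prod := by
    intro β h1 h2
    by_cases hK : K ∈ β.support
    · have hs : β.support = insert K (α.support.erase K) :=
        h1.antisymm (Finset.insert_subset hK h2)
      have hp : β.support.toList.Perm (K :: (α.support.erase K).toList) := by
        rw [hs]; exact Finset.toList_insert (by simp)
      refine (hp.map fun J => eU J ^ β J).prod_eq' ?_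
      exact List.pairwise_map.2 (List.pairwise_iff_getElem.2 fun a b _ _ _ =>
        ((eU_comm _ _).pow_pow _ _))
    · have hs : β.support = α.support.erase K := by
        refine Finset.Subset.antisymm (fun J hJ => ?_) h2
        rcases Finset.mem_insert.1 (h1 hJ) with rfl | h
        · exact absurd hJ hK
        · exact h
      rw [Finsupp.notMem_support_iff] at hK
      rw [List.map_cons, List.prod_cons, hK, pow_zero, one_mul, uPow, hs]
  have hα := hlist α (by intro J hJ; by_cases h : J = K <;> simp_all) (Finset.erase_subset _ _)
  have hβ := hlist (α + Finsupp.single K 1) hsupp.le (by rw [hsupp]; exact Finset.subset_insert _ _)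
  have h := mul_prod_pow_list eU_comm α K (K :: (α.support.erase K).toList)
    (List.nodup_cons.2 ⟨by simp, Finset.nodup_toList _⟩) List.mem_cons_self
  have hup : (⇑(α + Finsupp.single K 1 : MI N →₀ ℕ) : MI N → ℕ) = Function.update α K (α K + 1) := by
    funext J
    by_cases hJ : J = K
    · subst hJ; simp
    · simp [hJ]
  rw [hβ, hup, ← h, hα]
  rfl

lemma dU_uPow {N : ℕ} (K : MI N) (α : MI N →₀ ℕ) (f : Loc N) :
    dU K (uPow α f) = uPow α (dU K f) := by
  have : Commute (eU K) (uPow α) := by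
    refine Commute.list_prod_right _ _ fun x hx => ?_
    obtain ⟨J, -, rfl⟩ := List.mem_map.1 hx
    exact (eU_comm K J).pow_right _
  exact LinearMap.congr_fun this.eq f

/-- Induction on multi-indices: from `0`, raising one entry at a time. -/
lemma dPow_induction {N : ℕ} {P : MI N → Prop} (h0 : P 0) (h : ∀ i I, P I → P (inc i I))
    (I : MI N) : P I := by
  induction hn : ∑ i, I i generalizing I with
  | zero =>
    have : I = 0 := by
      funext i
      exact Finset.sum_eq_zero_iff.1 hn i (Finset.mem_univ i)
    exact this ▸ h0
  | succ n ih =>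
    obtain ⟨i, hi⟩ : ∃ i, I i ≠ 0 := by
      by_contra! hc
      simp [hc] at hn
    have hI : I = inc i (Function.update I i (I i - 1)) := by
      funext j
      by_cases hj : j = i
      · subst hj; simp [inc]; omega
      · simp [inc, hj]
    have hs := sum_inc i (Function.update I i (I i - 1))
    rw [← hI, hn] at hs
    rw [hI]
    exact h _ _ (ih _ (by omega))

lemma le_degf {N : ℕ} {α : MI N →₀ ℕ} {J : MI N} (h : J ∈ α.support) : ∑ i, J i ≤ degf α :=
  Finset.le_sup (f := fun J : MI N => ∑ i, J i) h

lemma degf_zero {N : ℕ} : degf (0 : MI N →₀ ℕ) = 0 := by simp [degf]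

lemma degf_add_single {N : ℕ} (α : MI N →₀ ℕ) (K : MI N) :
    degf (α + Finsupp.single K 1) = max (degf α) (∑ i, K i) := by
  classical
  have hsupp : (α + Finsupp.single K 1).support = insert K α.support := by
    ext J
    by_cases hJ : J = K
    · subst hJ; simp
    · simp [hJ]
  rw [degf, hsupp, Finset.sup_insert, sup_comm]
  rfl

/-- An exponent of positive degree contains a `u_K` with `|K|` equal to that degree. -/
lemma exists_top {N : ℕ} {α : MI N →₀ ℕ} (h : 0 < degf α) :
    ∃ (K : MI N) (β : MI N →₀ ℕ), α = β + Finsupp.single K 1 ∧ ∑ i, K i = degf α := by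
  have hne : α.support.Nonempty := by
    by_contra hc
    rw [Finset.not_nonempty_iff_eq_empty] at hc
    simp [degf, hc] at h
  obtain ⟨K, hK, hs⟩ := Finset.exists_mem_eq_sup α.support hne fun J : MI N => ∑ i, J i
  refine ⟨K, α - Finsupp.single K 1, ?_, hs.symm⟩
  rw [tsub_add_cancel_of_le]
  rw [Finsupp.single_le_iff]
  exact Nat.one_le_iff_ne_zero.2 (Finsupp.mem_support_iff.1 hK)

/-- A bound on `|J|` over the jet coordinates on which `f` depends. -/
lemma exists_order {N : ℕ} (f : Loc N) : ∃ M, ∀ K : MI N, M ≤ ∑ i, K i → dU K f = 0 := by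
  obtain ⟨S, hS⟩ := exists_dU_eq_zero f
  refine ⟨S.sup (fun K => ∑ i, K i) + 1, fun K hK => hS K fun hmem => ?_⟩
  have := Finset.le_sup (f := fun K : MI N => ∑ i, K i) hmem
  omega

lemma exists_uPow_eq_zero {N : ℕ} (f : Loc N) : ∃ M, ∀ α, M ≤ degf α → uPow α f = 0 := by
  obtain ⟨M, hM⟩ := exists_order f
  refine ⟨M + 1, fun α hα => ?_⟩
  obtain ⟨K, β, rfl, hK⟩ := exists_top (α := α) (by omega)
  rw [uPow_add_single, dU_uPow, hM K (by omega), map_zero]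


/-! ### Finite differential operators, filtered by formal degree -/

/-- Not necessarily linear operators from `n`-tuples of local functions to local functions. -/
abbrev AOp (N n : ℕ) := (Fin n → Loc N) → Loc N

/-- The monomial operator `f ↦ Π_{j ∈ T} (d/dx)^{I_j} (∂/∂u)^{α_j} f_j`. -/
noncomputable def gen {N n : ℕ} (T : Finset (Fin n)) (I : Fin n → MI N)
    (α : Fin n → (MI N →₀ ℕ)) : AOp N n :=
  fun f => ∏ j ∈ T, dPow (I j) (uPow (α j) (f j))

/-- The operators which are finite combinations, with local coefficients, of monomials in the
arguments `f_j`, `j ∈ T`, of formal degree `Σ_j deg_f(α_j)` at least `m`. -/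
def W {N n : ℕ} (T : Finset (Fin n)) (m : ℕ) : Submodule (Loc N) (AOp N n) :=
  Submodule.span (Loc N) {F | ∃ I α, m ≤ ∑ j ∈ T, degf (α j) ∧ F = gen T I α}

section Filtration

variable {N n : ℕ} {T T' : Finset (Fin n)} {m m' : ℕ}

lemma gen_mem (I : Fin n → MI N) (α : Fin n → (MI N →₀ ℕ)) (h : m ≤ ∑ j ∈ T, degf (α j)) :
    gen T I α ∈ W T m :=
  Submodule.subset_span ⟨I, α, h, rfl⟩

lemma W_mono (h : m ≤ m') : (W T m' : Submodule (Loc N) (AOp N n)) ≤ W T m :=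
  Submodule.span_mono fun _ ⟨I, α, hm, e⟩ => ⟨I, α, h.trans hm, e⟩

lemma mon_mem (I : MI N) (α : MI N →₀ ℕ) (j : Fin n) :
    (fun f => dPow I (uPow α (f j)) : AOp N n) ∈ W {j} (degf α) := by
  have := gen_mem (T := {j}) (m := degf α) (fun _ => I) (fun _ => α) (by simp)
  have e : (gen {j} (fun _ => I) (fun _ => α) : AOp N n) = fun f => dPow I (uPow α (f j)) := by
    funext f; simp [gen]
  rwa [e] at this

lemma W_mul {F G : AOp N n} (hF : F ∈ W T m) (hG : G ∈ W T' m') (hd : Disjoint T T') :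
    F * G ∈ W (T ∪ T') (m + m') := by
  classical
  have h := Submodule.mul_mem_mul hF hG
  rw [W, W, Submodule.span_mul_span] at h
  refine Submodule.span_mono ?_ h
  rintro _ ⟨_, ⟨I, α, hα, rfl⟩, _, ⟨I', α', hα', rfl⟩, rfl⟩
  have hT' : ∀ j ∈ T', j ∉ T := fun j hj hj' => Finset.disjoint_left.1 hd hj' hj
  refine ⟨fun j => if j ∈ T then I j else I' j, fun j => if j ∈ T then α j else α' j, ?_, ?_⟩
  · rw [Finset.sum_union hd]
    refine add_le_add (hα.trans (le_of_eq ?_)) (hα'.trans (le_of_eq ?_))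
    · exact Finset.sum_congr rfl fun j hj => by simp only [if_pos hj]
    · exact Finset.sum_congr rfl fun j hj => by simp only [if_neg (hT' j hj)]
  · funext f
    simp only [gen, Pi.mul_apply]
    rw [Finset.prod_union hd]
    refine congrArg₂ (· * ·) ?_ ?_
    · exact Finset.prod_congr rfl fun j hj => by rw [if_pos hj, if_pos hj]
    · exact Finset.prod_congr rfl fun j hj => by rw [if_neg (hT' j hj), if_neg (hT' j hj)]

lemma one_mem : (1 : AOp N n) ∈ W ∅ 0 := by
  have := gen_mem (T := (∅ : Finset (Fin n))) (m := 0) (fun _ => (0 : MI N)) (fun _ => 0) (by simp)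
  have e : (gen ∅ (fun _ => 0) (fun _ => 0) : AOp N n) = 1 := by
    funext f; simp [gen]
  rwa [e] at this

lemma W_prod {τ : Type*} (Q : Finset τ) (G : τ → AOp N n) (R : τ → Finset (Fin n)) (d : τ → ℕ)
    (hG : ∀ t ∈ Q, G t ∈ W (R t) (d t)) (hR : (Q : Set τ).PairwiseDisjoint R) :
    ∏ t ∈ Q, G t ∈ W (Q.biUnion R) (∑ t ∈ Q, d t) := by
  classical
  induction Q using Finset.induction_on with
  | empty => exact one_mem
  | insert a Q ha ih =>
    rw [Finset.prod_insert ha, Finset.sum_insert ha, Finset.biUnion_insert]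
    refine W_mul (hG a (by simp)) (ih (fun t ht => hG t (by simp [ht]))
      (hR.subset (by simp))) ?_
    rw [Finset.disjoint_biUnion_right]
    intro t ht
    exact hR (by simp) (by simp [ht]) (by rintro rfl; exact ha ht)

lemma deriv_prod {τ : Type*} [DecidableEq τ] (E : Derivation ℝ (Loc N) (Loc N)) (Q : Finset τ)
    (g : τ → Loc N) : E (∏ t ∈ Q, g t) = ∑ t ∈ Q, (∏ s ∈ Q.erase t, g s) * E (g t) := by
  induction Q using Finset.induction_on with
  | empty => simp
  | insert a Q ha ih =>
    rw [Finset.prod_insert ha, E.leibniz, ih, Finset.sum_insert ha, Finset.erase_insert ha,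
      add_comm]
    simp only [smul_eq_mul, Finset.mul_sum]
    congr 1
    refine Finset.sum_congr rfl fun t ht => ?_
    have hta : a ≠ t := by rintro rfl; exact ha ht
    rw [Finset.erase_insert_of_ne hta, Finset.prod_insert (by simp [ha]), mul_assoc]

/-- A derivation applied to a product of operators in disjoint groups of arguments. -/
lemma W_leibniz {τ : Type*} [DecidableEq τ] (E : Derivation ℝ (Loc N) (Loc N)) (Q : Finset τ)
    (G : τ → AOp N n) (R : τ → Finset (Fin n)) (d e : τ → ℕ)
    (hG : ∀ t ∈ Q, G t ∈ W (R t) (d t))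
    (hE : ∀ t ∈ Q, (fun f => E (G t f) : AOp N n) ∈ W (R t) (e t))
    (hm : ∀ t ∈ Q, m ≤ ∑ s ∈ Q.erase t, d s + e t)
    (hR : (Q : Set τ).PairwiseDisjoint R) :
    (fun f => E (∏ t ∈ Q, G t f) : AOp N n) ∈ W (Q.biUnion R) m := by
  have h : (fun f => E (∏ t ∈ Q, G t f) : AOp N n)
      = ∑ t ∈ Q, (∏ s ∈ Q.erase t, G s) * (fun f => E (G t f)) := by
    funext f
    rw [deriv_prod, Finset.sum_apply]
    simp only [Pi.mul_apply, Finset.prod_apply]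
  rw [h]
  refine Submodule.sum_mem _ fun t ht => ?_
  have hdisj : Disjoint ((Q.erase t).biUnion R) (R t) := by
    rw [Finset.disjoint_biUnion_left]
    intro s hs
    exact hR (Finset.mem_of_mem_erase hs) ht (Finset.ne_of_mem_erase hs)
  have := W_mul (W_prod (Q.erase t) G R d (fun s hs => hG s (Finset.mem_of_mem_erase hs))
    (hR.subset (by simp))) (hE t ht) hdisj
  have hU : (Q.erase t).biUnion R ∪ R t = Q.biUnion R := by
    conv_rhs => rw [← Finset.insert_erase ht, Finset.biUnion_insert, Finset.union_comm]
  rw [hU] at this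
  exact W_mono (hm t ht) this

/-- Stability of the filtration under a derivation can be checked on monomials in one argument. -/
lemma W_deriv (E : Derivation ℝ (Loc N) (Loc N))
    (hE : ∀ I α (j : Fin n), (fun f => E (dPow I (uPow α (f j))) : AOp N n) ∈ W {j} (degf α))
    {F : AOp N n} (hF : F ∈ W T m) : (fun f => E (F f) : AOp N n) ∈ W T m := by
  classical
  induction hF using Submodule.span_induction with
  | mem F hF =>
    obtain ⟨I, α, hα, rfl⟩ := hF
    have := W_leibniz (m := m) E T (fun j f => dPow (I j) (uPow (α j) (f j))) (fun j => {j})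
      (fun j => degf (α j)) (fun j => degf (α j)) (fun j _ => mon_mem _ _ _)
      (fun j _ => hE _ _ _) (fun j hj => by rwa [Finset.sum_erase_add _ _ hj])
      (fun i _ j _ hij => by simpa using hij)
    rwa [Finset.biUnion_singleton_eq_self] at this
  | zero =>
    have : (fun f => E ((0 : AOp N n) f) : AOp N n) = 0 := by funext f; simp
    rw [this]; exact Submodule.zero_mem _
  | add F G _ _ hF hG =>
    have : (fun f => E ((F + G) f) : AOp N n) = (fun f => E (F f)) + fun f => E (G f) := by
      funext f; simp
    rw [this]; exact Submodule.add_mem _ hF hG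
  | smul p F hF' hF =>
    have : (fun f => E ((p • F) f) : AOp N n) = p • (fun f => E (F f)) + E p • F := by
      funext f
      simp [mul_comm]
    rw [this]
    exact Submodule.add_mem _ (Submodule.smul_mem _ _ hF) (Submodule.smul_mem _ _ hF')

lemma W_dT (i : Fin N) {F : AOp N n} (hF : F ∈ W T m) :
    (fun f => dT i (F f) : AOp N n) ∈ W T m := by
  refine W_deriv (dT i) (fun I α j => ?_) hF
  simp only [← dPow_inc]
  exact mon_mem _ _ _

lemma W_dPow (I : MI N) {F : AOp N n} (hF : F ∈ W T m) :
    (fun f => dPow I (F f) : AOp N n) ∈ W T m := by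
  induction I using dPow_induction with
  | h0 => simpa only [dPow_zero] using hF
  | h i I ih => simp only [dPow_inc]; exact W_dT i ih

/-- Moving `∂/∂u_K` past `(d/dx)^I` does not lower the formal degree, and produces only
derivatives `∂/∂u_J` with `|J| ≥ |K| - |I|`. -/
lemma dU_mon_mem (K I : MI N) (α : MI N →₀ ℕ) (j : Fin n)
    (h : m ≤ degf α ∨ m + ∑ i, I i ≤ ∑ i, K i) :
    (fun f => dU K (dPow I (uPow α (f j))) : AOp N n) ∈ W {j} m := by
  induction I using dPow_induction generalizing K with
  | h0 =>
    have hm : m ≤ degf (α + Finsupp.single K 1) := by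
      rw [degf_add_single]
      simpa using h
    simp only [dPow_zero, ← uPow_add_single]
    have := mon_mem (n := n) 0 (α + Finsupp.single K 1) j
    simp only [dPow_zero] at this
    exact W_mono hm this
  | h i I ih =>
    rw [sum_inc] at h
    have h1 := W_dT i (ih K (h.imp_right fun h => by omega))
    simp only [dPow_inc]
    by_cases hK : ∃ J, inc i J = K
    · obtain ⟨J, rfl⟩ := hK
      have h2 := ih J (h.imp_right fun h => by rw [sum_inc] at h; omega)
      have : (fun f => dU (inc i J) (dT i (dPow I (uPow α (f j)))) : AOp N n)
          = (fun f => dT i (dU (inc i J) (dPow I (uPow α (f j)))))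
            + fun f => dU J (dPow I (uPow α (f j))) := by
        funext f
        obtain ⟨S, hS⟩ := exists_dU_eq_zero (dPow I (uPow α (f j)))
        rw [dU_dT i _ _ hS]
        simp only [(inc_injective i).eq_iff, Pi.add_apply, Finset.sum_ite_eq']
        congr 1
        split_ifs with hJ
        · rfl
        · exact (hS J hJ).symm
      rw [this]
      exact Submodule.add_mem _ h1 h2
    · have : (fun f => dU K (dT i (dPow I (uPow α (f j)))) : AOp N n)
          = (fun f => dT i (dU K (dPow I (uPow α (f j))))) := by
        funext f
        obtain ⟨S, hS⟩ := exists_dU_eq_zero (dPow I (uPow α (f j)))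
        rw [dU_dT i _ _ hS, Finset.sum_eq_zero, add_zero]
        exact fun J _ => if_neg fun hJ => hK ⟨J, hJ⟩
      rw [this]
      exact h1

lemma W_dU (K : MI N) {F : AOp N n} (hF : F ∈ W T m) :
    (fun f => dU K (F f) : AOp N n) ∈ W T m :=
  W_deriv (dU K) (fun _ _ _ => dU_mon_mem _ _ _ _ (Or.inl le_rfl)) hF

lemma W_uPow (α : MI N →₀ ℕ) {F : AOp N n} (hF : F ∈ W T m) :
    (fun f => uPow α (F f) : AOp N n) ∈ W T m := by
  have hpow : ∀ (J : MI N) (k : ℕ) {F : AOp N n}, F ∈ W T m →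
      (fun f => (eU J ^ k) (F f) : AOp N n) ∈ W T m := by
    intro J k
    induction k with
    | zero => intro F hF; simpa using hF
    | succ k ih =>
      intro F hF
      simp only [pow_succ, Module.End.mul_apply]
      exact ih (W_dU J hF)
  unfold uPow
  generalize α.support.toList = l
  induction l with
  | nil => simpa using hF
  | cons b l ih =>
    simp only [List.map_cons, List.prod_cons, Module.End.mul_apply]
    exact hpow _ _ ih

/-- The convergence estimate for composition: for a fixed term
`f ↦ p Π_{t} (d/dx)^{J_t} (∂/∂u)^{β_t} f_{a(t)}`, a derivative `(∂/∂u)^α` with `deg_f(α)` large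
has large formal degree. Indeed one factor `∂/∂u_K` of top order `|K| = deg_f(α)` kills `p`,
and loses at most `|J_t|` orders when it is moved past `(d/dx)^{J_t}`. -/
lemma W_large {κ : ℕ} (a : Fin κ ↪ Fin n) (p : Loc N) (J : Fin κ → MI N)
    (β : Fin κ → (MI N →₀ ℕ)) (m : ℕ) :
    ∃ M, ∀ I α, M ≤ degf α →
      (fun f => dPow I (uPow α (p * ∏ t, dPow (J t) (uPow (β t) (f (a t))))) : AOp N n)
        ∈ W (Finset.univ.biUnion fun t => {a t}) m := by
  obtain ⟨M, hM⟩ := exists_order p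
  refine ⟨M + m + ∑ t, ∑ i, J t i + 1, fun I α hα => W_dPow I ?_⟩
  obtain ⟨K, γ, rfl, hK⟩ := exists_top (α := α) (by omega)
  simp only [uPow_add_single, dU_uPow]
  refine W_uPow γ ?_
  have : (fun f => dU K (p * ∏ t, dPow (J t) (uPow (β t) (f (a t)))) : AOp N n)
      = p • fun f => dU K (∏ t, dPow (J t) (uPow (β t) (f (a t)))) := by
    funext f
    simp [Derivation.leibniz, hM K (by omega)]
  rw [this]
  refine Submodule.smul_mem _ _ ?_
  refine W_leibniz (m := m) (dU K) Finset.univ (fun t f => dPow (J t) (uPow (β t) (f (a t))))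
    (fun t => {a t}) (fun t => degf (β t)) (fun _ => m) (fun t _ => mon_mem _ _ _)
    (fun t _ => dU_mon_mem _ _ _ _ (Or.inr ?_)) (fun t _ => Nat.le_add_left _ _)
    (fun s _ t _ hst => by simpa using hst)
  have := Finset.single_le_sum (f := fun t => ∑ i, J t i) (fun _ _ => Nat.zero_le _)
    (Finset.mem_univ t)
  omega

/-- Operators of large formal degree vanish on a given tuple of local functions. -/
lemma exists_W_eq_zero (f : Fin n → Loc N) :
    ∃ M, ∀ F : AOp N n, F ∈ W Finset.univ M → F f = 0 := by
  choose M hM using fun j => exists_uPow_eq_zero (f j)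
  refine ⟨∑ j, M j + 1, fun F hF => ?_⟩
  induction hF using Submodule.span_induction with
  | mem F hF =>
    obtain ⟨I, α, hα, rfl⟩ := hF
    obtain ⟨j, -, hj⟩ : ∃ j ∈ Finset.univ, M j < degf (α j) :=
      Finset.exists_lt_of_sum_lt (by omega)
    exact Finset.prod_eq_zero (Finset.mem_univ j) (by rw [hM j _ hj.le, map_zero])
  | zero => rfl
  | add F G _ _ hF hG => simp [hF, hG]
  | smul p F _ hF => simp [hF]

end Filtration

/-! ### Locally finite sums of finite operators -/

/-- The formal degree `Σ_j deg_f(α_j)` of an index. -/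
def tdeg {N n : ℕ} (Iα : Idx N n) : ℕ := ∑ j, degf (Iα.2 j)

lemma mem_W_univ {N n m : ℕ} {F : AOp N n} (hF : F ∈ W Finset.univ m) :
    ∃ c : Idx N n →₀ Loc N, (∀ Iα, c Iα ≠ 0 → m ≤ tdeg Iα) ∧
      ∀ f (Q : Finset (Idx N n)), c.support ⊆ Q →
        F f = ∑ Iα ∈ Q, c Iα * gen Finset.univ Iα.1 Iα.2 f := by
  have hset : {F : AOp N n | ∃ I α, m ≤ ∑ j, degf (α j) ∧ F = gen Finset.univ I α}
      = (fun Iα : Idx N n => gen Finset.univ Iα.1 Iα.2) '' {Iα | m ≤ tdeg Iα} := by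
    ext F
    constructor
    · rintro ⟨I, α, h, rfl⟩; exact ⟨(I, α), h, rfl⟩
    · rintro ⟨⟨I, α⟩, h, rfl⟩; exact ⟨I, α, h, rfl⟩
  rw [W, hset, Finsupp.mem_span_image_iff_linearCombination] at hF
  obtain ⟨c, hc, rfl⟩ := hF
  refine ⟨c, fun Iα h => (Finsupp.mem_supported _ _).1 hc (Finsupp.mem_support_iff.2 h),
    fun f Q hQ => ?_⟩
  rw [Finsupp.linearCombination_apply, Finsupp.sum_of_support_subset c hQ _ (by simp)]
  simp [Finset.sum_apply]

lemma mem_W_tdeg {N n : ℕ} (Iα : Idx N n) :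
    (gen Finset.univ Iα.1 Iα.2 : AOp N n) ∈ W Finset.univ (tdeg Iα) :=
  gen_mem _ _ le_rfl

lemma exists_W_eq_zero' {N n : ℕ} (f : Fin n → Loc N) :
    ∃ M, (∀ F : AOp N n, F ∈ W Finset.univ M → F f = 0) ∧
      ∀ Iα : Idx N n, M ≤ tdeg Iα → gen Finset.univ Iα.1 Iα.2 f = 0 := by
  obtain ⟨M, hM⟩ := exists_W_eq_zero f
  exact ⟨M, hM, fun Iα h => hM _ (W_mono h (mem_W_tdeg Iα))⟩

/-- The coefficients of an operator as elements of `Loc(E)`. -/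
def Good.coeff {N n : ℕ} {q : OpData N n} (hq : Good q) (Iα : Idx N n) : Loc N := ⟨q Iα, hq.1 Iα⟩

lemma Good.coeff_ne {N n : ℕ} {q : OpData N n} (hq : Good q) {Iα : Idx N n}
    (h : hq.coeff Iα ≠ 0) : q Iα ≠ 0 :=
  fun h0 => h (Subtype.ext h0)

lemma realize_term {N n : ℕ} (q : Loc N) (Iα : Idx N n) (f : Fin n → Loc N) (pt : JetPt N) :
    (q : Fn N) pt * ∏ j, DPow (Iα.1 j) (UPow (Iα.2 j) (f j)) pt
      = (q * gen Finset.univ Iα.1 Iα.2 f : Loc N).1 pt := by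
  have : ((gen Finset.univ Iα.1 Iα.2 f : Loc N) : Fn N)
      = ∏ j, DPow (Iα.1 j) (UPow (Iα.2 j) (f j)) := by
    simp only [gen, SubmonoidClass.coe_finsetProd, coe_dPow, coe_uPow]
  change _ = (q : Fn N) pt * ((gen Finset.univ Iα.1 Iα.2 f : Loc N) : Fn N) pt
  rw [this, Finset.prod_apply]

lemma coe_sum_apply {N : ℕ} {τ : Type*} (Z : Finset τ) (g : τ → Loc N) (pt : JetPt N) :
    ((∑ z ∈ Z, g z : Loc N) : Fn N) pt = ∑ z ∈ Z, (g z : Fn N) pt := by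
  rw [AddSubmonoidClass.coe_finsetSum, Finset.sum_apply]

/-- On a tuple of local functions, the sum defining an operator is finite; the finite set of
indices may be taken to contain any prescribed one. -/
lemma realizeU_eq_sum {N n : ℕ} {q : OpData N n} (hq : Good q) (f : Fin n → Loc N)
    (Z₀ : Finset (Idx N n)) : ∃ Z, Z₀ ⊆ Z ∧
      realizeU q (fun j => f j)
        = (∑ z ∈ Z, hq.coeff z * gen Finset.univ z.1 z.2 f : Loc N) := by
  classical
  obtain ⟨M, -, hM⟩ := exists_W_eq_zero' f
  refine ⟨Z₀ ∪ (hq.2 M).toFinset, Finset.subset_union_left, ?_⟩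
  funext pt
  rw [coe_sum_apply]
  simp only [realizeU]
  refine (tsum_congr fun z => realize_term (hq.coeff z) z f pt).trans ?_
  refine tsum_eq_sum fun z hz => ?_
  have hz' : ¬ (q z ≠ 0 ∧ tdeg z ≤ M) := fun h =>
    hz (Finset.mem_union_right _ ((hq.2 M).mem_toFinset.2 h))
  have : hq.coeff z * gen Finset.univ z.1 z.2 f = 0 := by
    by_cases h : hq.coeff z = 0
    · rw [h, zero_mul]
    · rw [hM z (not_le.1 fun hle => hz' ⟨hq.coeff_ne h, hle⟩).le, mul_zero]
  rw [this]
  rfl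

/-- A sum of finite operators is a local differential operator as soon as, for every `m`, all but
finitely many of its terms have formal degree at least `m`. -/
lemma isLDO_of_sum {N n : ℕ} {S : Type*} (F : S → AOp N n) (h0 : ∀ s, F s ∈ W Finset.univ 0)
    (hF : ∀ m, {s | F s ∉ W Finset.univ m}.Finite) (A : Op N n)
    (hA : ∀ (f : Fin n → Loc N) (Z₀ : Finset S), ∃ Z, Z₀ ⊆ Z ∧
      A (fun j => f j) = (∑ s ∈ Z, F s f : Loc N)) : IsLDO A := by
  classical
  -- The terms are grouped into finite sums `G k` of formal degree at least `k`.
  let Sm : ℕ → Finset S := fun m => (hF m).toFinset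
  have hSm : ∀ m s, s ∉ Sm m → F s ∈ W Finset.univ m := by
    intro m s hs
    by_contra h
    exact hs ((hF m).mem_toFinset.2 h)
  have hmono : ∀ k, Sm k ⊆ Sm (k + 1) := by
    intro k s hs
    have hs' : F s ∉ W Finset.univ k := (hF k).mem_toFinset.1 hs
    exact (hF (k + 1)).mem_toFinset.2 fun h => hs' (W_mono (Nat.le_succ k) h)
  let G : ℕ → AOp N n := fun k => ∑ s ∈ Sm (k + 1) \ Sm k, F s
  have hG : ∀ k, G k ∈ W Finset.univ k := fun k =>
    Submodule.sum_mem _ fun s hs => hSm k s (Finset.mem_sdiff.1 hs).2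
  have hGsum : ∀ M f, ∑ k ∈ Finset.range M, G k f = ∑ s ∈ Sm M, F s f := by
    intro M f
    induction M with
    | zero =>
      have : Sm 0 = ∅ := by
        ext s
        simp [Sm, h0]
      simp [this]
    | succ M ih =>
      rw [Finset.sum_range_succ, ih, ← Finset.sum_sdiff (hmono M), add_comm]
      simp [G]
  choose c hc hcf using fun k => mem_W_univ (hG k)
  let qL : Idx N n → Loc N := fun z => ∑ k ∈ Finset.range (tdeg z + 1), c k z
  have hq : Good fun z => (qL z : Fn N) := by
    refine ⟨fun z => (qL z).2, fun m => ?_⟩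
    refine ((Finset.range (m + 1)).biUnion fun k => (c k).support).finite_toSet.subset ?_
    rintro z ⟨hz, hzm⟩
    obtain ⟨k, hk, hkz⟩ : ∃ k ∈ Finset.range (tdeg z + 1), c k z ≠ 0 := by
      by_contra! hcon
      exact hz (congrArg Subtype.val (Finset.sum_eq_zero hcon))
    have hzm' : tdeg z ≤ m := hzm
    simp only [Finset.coe_biUnion, Set.mem_iUnion, Finset.mem_coe, Finset.mem_range] at hk ⊢
    exact ⟨k, by omega, Finsupp.mem_support_iff.2 hkz⟩
  refine ⟨_, hq, fun f hf pt => ?_⟩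
  let fL : Fin n → Loc N := fun j => ⟨f j, hf j⟩
  obtain ⟨M, hM₁, hM₂⟩ := exists_W_eq_zero' fL
  obtain ⟨Z, hZ, hAZ⟩ := hA fL (Sm M)
  obtain ⟨Q, hQ, hrQ⟩ := realizeU_eq_sum hq fL ((Finset.range M).biUnion fun k => (c k).support)
  refine congrFun (hAZ.trans (Eq.trans (congrArg Subtype.val ?_) hrQ.symm)) pt
  rw [← Finset.sum_subset hZ fun s _ hs => hM₁ _ (hSm M s hs), ← hGsum]
  have hterm : ∀ z, hq.coeff z * gen Finset.univ z.1 z.2 fL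
      = ∑ k ∈ Finset.range M, c k z * gen Finset.univ z.1 z.2 fL := by
    intro z
    by_cases hz : M ≤ tdeg z
    · simp [hM₂ z hz]
    · rw [← Finset.sum_mul]
      congr 1
      refine Finset.sum_subset (Finset.range_subset_range.2 (by omega)) fun k _ hk => ?_
      by_contra hne
      exact hk (Finset.mem_range.2 (Nat.lt_succ_of_le (hc k z hne)))
  simp only [hterm]
  rw [Finset.sum_comm]
  refine Finset.sum_congr rfl fun k hk => hcf k fL Q ?_
  exact (Finset.subset_biUnion_of_mem (fun k => (c k).support) hk).trans hQ

/-! ### Composition -/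

/-- The composition of an `l`-multilinear local differential operator with
`k_1`-,…,`k_l`-multilinear local differential operators (arguments distributed by any
identification `e : (Σ i, Fin (k i)) ≃ Fin (Σ i, k i)` of the index sets) is a
`(k_1+⋯+k_l)`-multilinear local differential operator. -/
theorem comp_isLDO {N l : ℕ} (k : Fin l → ℕ)
    (A : Op N l) (hA : IsLDO A)
    (B : (i : Fin l) → Op N (k i)) (hB : ∀ i, IsLDO (B i))
    (e : (Σ i : Fin l, Fin (k i)) ≃ Fin (∑ i, k i)) :
    IsLDO (fun f : Fin (∑ i, k i) → Fn N =>
      A fun i => B i fun t => f (e ⟨i, t⟩)) := by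
  classical
  obtain ⟨q, hq, hAq⟩ := hA
  choose p hp hBp using hB
  let R : Fin l → Finset (Fin (∑ i, k i)) := fun i =>
    Finset.univ.biUnion fun t : Fin (k i) => {e ⟨i, t⟩}
  have hR : ((Finset.univ : Finset (Fin l)) : Set (Fin l)).PairwiseDisjoint R := by
    intro i _ j _ hij
    refine Finset.disjoint_left.2 fun x hx hx' => hij ?_
    simp only [R, Finset.mem_biUnion, Finset.mem_univ, true_and, Finset.mem_singleton] at hx hx'
    obtain ⟨t, rfl⟩ := hx
    obtain ⟨t', h⟩ := hx'
    exact congrArg Sigma.fst (e.injective h)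
  have hRu : Finset.univ.biUnion R = Finset.univ := by
    ext x
    simp only [R, Finset.mem_biUnion, Finset.mem_univ, true_and, Finset.mem_singleton, iff_true]
    exact ⟨(e.symm x).1, (e.symm x).2, by simp⟩
  have ha : ∀ i, Function.Injective fun t : Fin (k i) => e ⟨i, t⟩ := fun i t t' h =>
    eq_of_heq (Sigma.mk.inj (e.injective h)).2
  -- The terms of the inner operators, and those of the composition.
  let inner : (i : Fin l) → Idx N (k i) → AOp N (∑ i, k i) := fun i r f =>
    (hp i).coeff r * ∏ t, dPow (r.1 t) (uPow (r.2 t) (f (e ⟨i, t⟩)))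
  let fac : Idx N l → (∀ i, Idx N (k i)) → Fin l → AOp N (∑ i, k i) := fun s r i f =>
    dPow (s.1 i) (uPow (s.2 i) (inner i (r i) f))
  let F : Idx N l × (∀ i, Idx N (k i)) → AOp N (∑ i, k i) := fun z =>
    hq.coeff z.1 • ∏ i, fac z.1 z.2 i
  have hinner : ∀ i r, inner i r ∈ W (R i) (tdeg r) := by
    intro i r
    have h := W_prod Finset.univ (fun (t : Fin (k i)) (f : Fin (∑ i, k i) → Loc N) =>
      dPow (r.1 t) (uPow (r.2 t) (f (e ⟨i, t⟩)))) (fun t => {e ⟨i, t⟩})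
      (fun t => degf (r.2 t)) (fun t _ => mon_mem _ _ _)
      (fun t _ t' _ htt => by simpa using fun h => htt (ha i h))
    have hi : inner i r = (hp i).coeff r • ∏ t, fun f : Fin (∑ i, k i) → Loc N =>
        dPow (r.1 t) (uPow (r.2 t) (f (e ⟨i, t⟩))) := by
      funext f
      simp [inner]
    rw [hi]
    exact Submodule.smul_mem _ _ h
  have hfac : ∀ s r i, fac s r i ∈ W (R i) (tdeg (r i)) := fun s r i =>
    W_dPow _ (W_uPow _ (hinner i (r i)))
  have hFW : ∀ z, F z ∈ W Finset.univ (∑ i, tdeg (z.2 i)) := by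
    intro z
    have h := W_prod Finset.univ (fac z.1 z.2) R _ (fun i _ => hfac z.1 z.2 i) hR
    rw [hRu] at h
    exact Submodule.smul_mem _ _ h
  refine isLDO_of_sum F (fun z => W_mono (Nat.zero_le _) (hFW z)) (fun m => ?_) _ (fun f Z₀ => ?_)
  · choose M hM using fun i r => W_large (⟨_, ha i⟩ : Fin (k i) ↪ Fin (∑ i, k i))
      ((hp i).coeff r) r.1 r.2 m
    let Rm : ∀ i, Finset (Idx N (k i)) := fun i => ((hp i).2 m).toFinset
    let L := ∑ i, ∑ r ∈ Rm i, M i r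
    refine ((hq.2 (l * L)).prod (Set.Finite.pi' fun i => (Rm i).finite_toSet)).subset ?_
    rintro ⟨s, r⟩ hz
    have hr : ∀ i, r i ∈ Rm i := by
      intro i
      refine ((hp i).2 m).mem_toFinset.2 ⟨fun h0 => hz ?_, ?_⟩
      · have h1 : (hp i).coeff (r i) = 0 := Subtype.ext h0
        have h2 : fac s r i = 0 := by
          funext f
          simp [fac, inner, h1]
        have h3 : F (s, r) = 0 := by
          simp only [F]
          rw [Finset.prod_eq_zero (Finset.mem_univ i) h2, smul_zero]
        rw [h3]
        exact Submodule.zero_mem _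
      · by_contra hlt
        refine hz (W_mono ?_ (hFW (s, r)))
        have := Finset.single_le_sum (f := fun i => tdeg (r i)) (fun _ _ => Nat.zero_le _)
          (Finset.mem_univ i)
        exact (not_le.1 hlt).le.trans this
    refine ⟨⟨fun h0 => hz ?_, ?_⟩, hr⟩
    · have h1 : hq.coeff s = 0 := Subtype.ext h0
      have h3 : F (s, r) = 0 := by simp only [F, h1, zero_smul]
      rw [h3]
      exact Submodule.zero_mem _
    · by_contra hlt
      obtain ⟨i, -, hi⟩ : ∃ i ∈ Finset.univ, L < degf (s.2 i) := by
        refine Finset.exists_lt_of_sum_lt ?_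
        simpa using hlt
      have hL : M i (r i) ≤ L :=
        (Finset.single_le_sum (f := M i) (fun _ _ => Nat.zero_le _) (hr i)).trans
          (Finset.single_le_sum (f := fun i => ∑ r ∈ Rm i, M i r) (fun _ _ => Nat.zero_le _)
            (Finset.mem_univ i))
      have hbig : fac s r i ∈ W (R i) m := hM i (r i) _ _ (hL.trans hi.le)
      refine hz (Submodule.smul_mem _ _ ?_)
      have h := W_prod Finset.univ (fac s r) R (Pi.single i m) (fun j _ => ?_) hR
      · rw [hRu] at h
        simpa using h
      · by_cases hj : j = i
        · subst hj; simpa using hbig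
        · rw [Pi.single_eq_of_ne hj]
          exact W_mono (Nat.zero_le _) (hfac s r j)
  · choose Q hQ hBQ using fun i => realizeU_eq_sum (hp i) (fun t => f (e ⟨i, t⟩))
      (Z₀.image fun z => z.2 i)
    let b : Fin l → Loc N := fun i => ∑ r ∈ Q i, inner i r f
    have hb : ∀ i, (B i fun t => f (e ⟨i, t⟩)) = b i := fun i =>
      (funext (hBp i _ fun t => (f (e ⟨i, t⟩)).2)).trans (hBQ i)
    obtain ⟨Zs, hZs, hAZ⟩ := realizeU_eq_sum hq b (Z₀.image Prod.fst)
    refine ⟨Zs ×ˢ Fintype.piFinset Q, fun z hz => ?_, ?_⟩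
    · exact Finset.mem_product.2 ⟨hZs (Finset.mem_image_of_mem _ hz),
        Fintype.mem_piFinset.2 fun i => hQ i (Finset.mem_image_of_mem (fun z => z.2 i) hz)⟩
    · simp only [hb]
      refine ((funext (hAq _ fun i => (b i).2)).trans hAZ).trans (congrArg Subtype.val ?_)
      rw [Finset.sum_product]
      refine Finset.sum_congr rfl fun s _ => ?_
      simp only [gen, b, map_sum, F, Pi.smul_apply, Finset.prod_apply, smul_eq_mul, fac]
      rw [Finset.prod_univ_sum, Finset.mul_sum]

end JetBundle
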